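/- Let G be a finite weighted directed multigraph with vertex set {1,...,n}, edge signs σ_e ∈ {+1,-1}, and edge connections φ_e taken in a commutative ring R (e.g. a Laurent polynomial ring), such that every edge e from i to j has a reverse edge from j to i with the same sign and inverse connection. Define the adjacency matrix A = (a_{ij}) by a_{ij} = Σ σ_e φ_e over edges from i to j for i ≠ j and a_{ii} = 0, the diagonal matrix δ with δ_{ii} = Σ_j a_{ij}, and the Laplacian L = A − δ. Then for any non-loop edge e, det(L_G) = det(L_{G∖e}) + σ_e · det(L_{G/e}), where G∖e is G with e (and its reverse) deleted and G/e is G with e contracted. -/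

import Mathlib

/-- A finite signed graph with edge "connections" (holonomies) valued in the
units of a commutative ring `R`.  Each undirected edge is recorded once, with a
chosen direction from `src` to `tgt`; the symmetrized (directed) graph has, for
each such edge, a reverse edge with the same sign and inverse connection, and
this symmetrization is built into the definition of the adjacency matrix. -/
structure CGraph (R : Type) [CommRing R] where
  V : Type
  E : Type
  [fV : Fintype V]
  [dV : DecidableEq V]
  [fE : Fintype E]
  [dE : DecidableEq E]
  src : E → V
  tgt : E → V
  sign : E → R
  conn : E → Rˣ

attribute [instance] CGraph.fV CGraph.dV CGraph.fE CGraph.dE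

namespace CGraph

variable {R : Type} [CommRing R]

/-- The adjacency matrix: the `(i,j)` entry is the sum of `σ_e φ_e` over
directed edges from `i` to `j` (each undirected edge contributing its two
directions with inverse connections). -/
def adj (G : CGraph R) : Matrix G.V G.V R := fun i j =>
  ∑ e : G.E,
    ((if G.src e = i ∧ G.tgt e = j then G.sign e * (G.conn e : R) else 0)
      + (if G.src e = j ∧ G.tgt e = i then G.sign e * ((G.conn e)⁻¹ : Rˣ) else 0))

/-- The signed degree of a vertex (loops counted twice). -/
def deg (G : CGraph R) : G.V → R := fun i =>
  ∑ e : G.E, G.sign e *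
    ((if G.src e = i then 1 else 0) + (if G.tgt e = i then 1 else 0))

/-- The Laplacian matrix of `G`, normalized (as in Forman's formula) so that its
determinant is the Laplacian polynomial. -/
def lap (G : CGraph R) : Matrix G.V G.V R := Matrix.diagonal G.deg - G.adj

/-- The Laplacian determinant of `G`. -/
def lapDet (G : CGraph R) : R := G.lap.det

/-- Deletion of the (undirected) edge `e0` (i.e. of both of its directions). -/
def deleteEdge (G : CGraph R) (e0 : G.E) : CGraph R where
  V := G.V
  E := {e : G.E // e ≠ e0}
  src e := G.src e.1
  tgt e := G.tgt e.1
  sign e := G.sign e.1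
  conn e := G.conn e.1

/-- Contraction of a non-loop edge `e0`: its endpoints are identified (the
vertex `tgt e0` is absorbed into `src e0`), the edge `e0` (with its reverse) is
removed, and connections of the remaining edges are modified by the gauge
change concentrated at the absorbed vertex, so that connections of paths are
preserved. -/
def contract (G : CGraph R) (e0 : G.E) (h : G.src e0 ≠ G.tgt e0) : CGraph R where
  V := {u : G.V // u ≠ G.tgt e0}
  E := {e : G.E // e ≠ e0}
  src e := if h' : G.src e.1 = G.tgt e0 then ⟨G.src e0, h⟩ else ⟨G.src e.1, h'⟩
  tgt e := if h' : G.tgt e.1 = G.tgt e0 then ⟨G.src e0, h⟩ else ⟨G.tgt e.1, h'⟩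
  sign e := G.sign e.1
  conn e :=
    (if G.src e.1 = G.tgt e0 then G.conn e0 else 1) * G.conn e.1 *
      (if G.tgt e.1 = G.tgt e0 then (G.conn e0)⁻¹ else 1)

end CGraph

/-!
The Laplacian is a signed sum of rank-one matrices, one for each edge. Identifying vertices and
gauging the connections acts on each of them, and hence on the Laplacian, as a congruence
`B * L * C`. For the contraction of an edge `e` from `s` to `t`, the matrix `B` is a transvection
without its row `t` and `C` is one without its column `t`. The full transvections have determinant
one and turn the rank-one matrix of `e` into the matrix unit at `(t, t)`. Hence deleting `e`
subtracts from the determinant `σ_e` times the minor at `t` of the transformed Laplacian, and this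
minor is the Laplacian determinant of the contraction.
-/

open Matrix

section Minors

variable {n R : Type*} [Fintype n] [DecidableEq n] [CommRing R]

theorem det_add_single (A : Matrix n n R) (i j : n) (c : R) :
    (A + single i j c).det = A.det + c * A.adjugate j i := by
  have hrow : A + single i j c = A.updateRow i (A i + c • Pi.single j 1) := by
    ext k l
    rcases eq_or_ne k i with rfl | hk
    · simp [single_apply, Pi.single_apply, eq_comm]
    · simp [hk, hk.symm]
  rw [hrow, det_updateRow_add, updateRow_eq_self, det_updateRow_smul, adjugate_apply]

theorem adjugate_apply_self_eq_det_submatrix (A : Matrix n n R) (t : n) :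
    A.adjugate t t = (A.submatrix (Subtype.val : {u // u ≠ t} → n) Subtype.val).det := by
  rw [adjugate_apply, twoBlockTriangular_det _ (· ≠ t)]
  · have hminor : toSquareBlockProp (A.updateRow t (Pi.single t 1)) (· ≠ t) =
        A.submatrix Subtype.val Subtype.val := by
      ext u v
      simp [toSquareBlockProp_def, updateRow_ne u.2]
    have hcorner : toSquareBlockProp (A.updateRow t (Pi.single t 1)) (¬ · ≠ t) = 1 := by
      ext ⟨u, hu⟩ ⟨v, hv⟩
      obtain rfl := not_not.mp hu
      obtain rfl := not_not.mp hv
      simp [toSquareBlockProp_def]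
    rw [hminor, hcorner, det_one, mul_one]
  · intro u hu v hv
    obtain rfl := not_not.mp hu
    simp [hv]

end Minors

theorem vecMulVec_single_single {m n R : Type*} [DecidableEq m] [DecidableEq n] [MulZeroClass R]
    (i : m) (j : n) (x y : R) :
    vecMulVec (Pi.single i x) (Pi.single j y) = single i j (x * y) := by
  ext k l
  simp only [vecMulVec_apply, Pi.single_apply, single_apply, @eq_comm _ k, @eq_comm _ l,
    ite_zero_mul_ite_zero]

theorem transpose_transvection {n R : Type*} [DecidableEq n] [CommRing R] (i j : n) (c : R) :
    (transvection i j c)ᵀ = transvection j i c := by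
  simp [transvection]

namespace CGraph

section EdgeLap

variable {V W R : Type*} [DecidableEq V] [DecidableEq W] [Ring R]

/-- The incidence vector of an edge from `a` to `b`, twisted by `c` at `b`. -/
def edgeVec (a b : V) (c : R) : V → R := Pi.single a 1 - Pi.single b c

/-- The Laplacian of a single edge from `a` to `b` with sign `1` and connection `c`, written as a
column times a row; `edgeLap_eq_single_sub` compares this with the usual form. -/
def edgeLap (a b : V) (c : Rˣ) : Matrix V V R :=
  vecMulVec (edgeVec a b (↑c⁻¹ : R)) (edgeVec a b (c : R))

theorem edgeLap_eq_single_sub (a b : V) (c : Rˣ) :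
    edgeLap a b c =
      single a a 1 + single b b 1 - (single a b (c : R) + single b a (↑c⁻¹ : R)) := by
  simp only [edgeLap, edgeVec, sub_vecMulVec, vecMulVec_sub, vecMulVec_single_single,
    Units.inv_mul, one_mul, mul_one]
  abel

theorem edgeLap_self_one (a : V) : edgeLap a a (1 : Rˣ) = 0 := by
  simp [edgeLap, edgeVec]

/-- The matrix with entry `κ v` at each `(v, π v)`. It describes how row vectors indexed by `V`
change when the vertices are identified along `π` after the gauge transformation `κ`. -/
def gaugeMatrix (π : V → W) (κ : V → Rˣ) : Matrix V W R :=
  of fun v => Pi.single (π v) (κ v : R)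

variable [Fintype V]

theorem edgeVec_vecMul_gaugeMatrix (π : V → W) (κ : V → Rˣ) (a b : V) (c : R) :
    edgeVec a b c ᵥ* gaugeMatrix π κ =
      (κ a : R) • edgeVec (π a) (π b) (↑(κ a)⁻¹ * c * κ b) := by
  simp [edgeVec, gaugeMatrix, sub_vecMul, smul_sub, ← Pi.single_smul, mul_assoc]

theorem gaugeMatrix_transpose_mul_edgeLap_mul_gaugeMatrix {R : Type*} [CommRing R]
    (π : V → W) (κ : V → Rˣ) (a b : V) (c : Rˣ) :
    (gaugeMatrix π κ⁻¹)ᵀ * edgeLap a b c * gaugeMatrix π κ =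
      edgeLap (π a) (π b) ((κ a)⁻¹ * c * κ b) := by
  rw [edgeLap, mul_vecMulVec, vecMulVec_mul, mulVec_transpose, edgeVec_vecMul_gaugeMatrix,
    edgeVec_vecMul_gaugeMatrix, smul_vecMulVec, vecMulVec_smul, smul_smul]
  simp [edgeLap, mul_comm, mul_left_comm, mul_assoc]

end EdgeLap

section Collapse

variable {V R : Type*} [DecidableEq V] [CommRing R] {s t : V}

/-- The map on vertices that absorbs `t` into `s`. -/
def collapse (h : s ≠ t) (v : V) : {u // u ≠ t} :=
  if h' : v = t then ⟨s, h⟩ else ⟨v, h'⟩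

theorem gaugeMatrix_collapse (h : s ≠ t) (c : Rˣ) :
    gaugeMatrix (collapse h) (Pi.mulSingle t c) =
      (transvection t s (c : R)).submatrix id Subtype.val := by
  ext v w
  rcases eq_or_ne v t with rfl | hv
  · simp [gaugeMatrix, collapse, transvection, Pi.single_apply, single_apply, one_apply, w.2.symm,
      Subtype.ext_iff, eq_comm]
  · simp [gaugeMatrix, collapse, transvection, Pi.single_apply, one_apply, hv, hv.symm,
      Subtype.ext_iff, eq_comm]

variable [Fintype V]

theorem gaugeMatrix_collapse_transpose_mul_mul (h : s ≠ t) (c : Rˣ) (A : Matrix V V R) :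
    (gaugeMatrix (collapse h) (Pi.mulSingle t c⁻¹)⁻¹)ᵀ * A *
        gaugeMatrix (collapse h) (Pi.mulSingle t c⁻¹) =
      (transvection s t (c : R) * A * transvection t s (↑c⁻¹ : R)).submatrix
        Subtype.val Subtype.val := by
  rw [← Pi.mulSingle_inv, inv_inv, gaugeMatrix_collapse, gaugeMatrix_collapse,
    transpose_submatrix, transpose_transvection,
    submatrix_mul _ _ _ id _ Function.bijective_id,
    submatrix_mul _ _ _ id _ Function.bijective_id, submatrix_id_id]

theorem edgeVec_vecMul_transvection (h : s ≠ t) (c : Rˣ) :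
    edgeVec s t (c : R) ᵥ* transvection t s (↑c⁻¹ : R) = Pi.single t (-c : R) := by
  ext v
  rcases eq_or_ne v s with rfl | hv
  · simp [transvection, edgeVec, vecMul_add, sub_vecMul, h, h.symm]
  · simp [transvection, edgeVec, vecMul_add, sub_vecMul, hv, hv.symm, Pi.single_neg]

theorem transvection_mul_edgeLap_mul_transvection (h : s ≠ t) (c : Rˣ) :
    transvection s t (c : R) * edgeLap s t c * transvection t s (↑c⁻¹ : R) = single t t 1 := by
  have hcol : transvection s t (c : R) *ᵥ edgeVec s t (↑c⁻¹ : R) = Pi.single t (-↑c⁻¹ : R) := by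
    rw [← vecMul_transpose, transpose_transvection]
    simpa using edgeVec_vecMul_transvection h c⁻¹
  rw [edgeLap, mul_vecMulVec, vecMulVec_mul, hcol, edgeVec_vecMul_transvection h,
    vecMulVec_single_single, neg_mul_neg, c.inv_mul]

theorem det_transvection_mul_mul_transvection (h : s ≠ t) (x y : R) (A : Matrix V V R) :
    (transvection s t x * A * transvection t s y).det = A.det := by
  rw [det_mul, det_mul, det_transvection_of_ne _ _ h, det_transvection_of_ne _ _ h.symm, one_mul,
    mul_one]

theorem det_sub_smul_edgeLap (h : s ≠ t) (c : Rˣ) (r : R) (A : Matrix V V R) :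
    (A - r • edgeLap s t c).det =
      A.det - r * ((transvection s t (c : R) * A * transvection t s (↑c⁻¹ : R)).submatrix
        (Subtype.val : {u // u ≠ t} → V) Subtype.val).det := by
  rw [← det_transvection_mul_mul_transvection h ↑c ↑c⁻¹ (A - _),
    ← det_transvection_mul_mul_transvection h ↑c ↑c⁻¹ A, Matrix.mul_sub, Matrix.sub_mul,
    Matrix.mul_smul, Matrix.smul_mul, transvection_mul_edgeLap_mul_transvection h,
    sub_eq_add_neg, ← neg_smul, smul_single, smul_eq_mul, mul_one, det_add_single,
    adjugate_apply_self_eq_det_submatrix, neg_mul, ← sub_eq_add_neg]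

end Collapse

variable {R : Type} [CommRing R]

theorem lap_eq_sum (G : CGraph R) :
    G.lap = ∑ e, G.sign e • edgeLap (G.src e) (G.tgt e) (G.conn e) := by
  have hdeg : diagonal G.deg =
      ∑ e, G.sign e • (single (G.src e) (G.src e) 1 + single (G.tgt e) (G.tgt e) 1) := by
    ext i j
    rcases eq_or_ne i j with rfl | hij
    · simp [deg, Matrix.sum_apply, single_apply, mul_add]
    · simp [Matrix.sum_apply, ← diagonal_single, hij]
  have hadj : G.adj = ∑ e, G.sign e • (single (G.src e) (G.tgt e) (G.conn e : R) +
      single (G.tgt e) (G.src e) (↑(G.conn e)⁻¹ : R)) := by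
    ext i j
    simp [adj, Matrix.sum_apply, single_apply, and_comm]
  simp only [lap, hdeg, hadj, edgeLap_eq_single_sub, smul_sub, Finset.sum_sub_distrib]

-- The vertex type of `G.deleteEdge e0` is `G.V` only after unfolding, whence the type ascription.
theorem lap_deleteEdge (G : CGraph R) (e0 : G.E) :
    (G.deleteEdge e0).lap =
      (G.lap - G.sign e0 • edgeLap (G.src e0) (G.tgt e0) (G.conn e0) : Matrix G.V G.V R) := by
  rw [lap_eq_sum G, ← Finset.sum_erase_eq_sub (Finset.mem_univ e0),
    Finset.sum_subtype (p := (· ≠ e0)) _ (by simp)]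
  exact (G.deleteEdge e0).lap_eq_sum

theorem lapDet_deleteEdge (G : CGraph R) (e0 : G.E) :
    (G.deleteEdge e0).lapDet =
      (G.lap - G.sign e0 • edgeLap (G.src e0) (G.tgt e0) (G.conn e0)).det :=
  congrArg det (G.lap_deleteEdge e0)

theorem lap_contract (G : CGraph R) (e0 : G.E) (h : G.src e0 ≠ G.tgt e0) :
    (G.contract e0 h).lap =
      (transvection (G.src e0) (G.tgt e0) (G.conn e0 : R) * G.lap *
        transvection (G.tgt e0) (G.src e0) (↑(G.conn e0)⁻¹ : R)).submatrix
          (Subtype.val : {u // u ≠ G.tgt e0} → G.V) Subtype.val := by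
  rw [← gaugeMatrix_collapse_transpose_mul_mul h]
  set κ : G.V → Rˣ := Pi.mulSingle (G.tgt e0) (G.conn e0)⁻¹
  have hκ_apply (v : G.V) : κ v = if v = G.tgt e0 then (G.conn e0)⁻¹ else 1 :=
    Pi.mulSingle_apply ..
  -- The edge `e0` itself becomes a loop with trivial connection, so it drops out of the sum.
  have hloop : edgeLap (collapse h (G.src e0)) (collapse h (G.tgt e0))
      ((κ (G.src e0))⁻¹ * G.conn e0 * κ (G.tgt e0)) = (0 : Matrix _ _ R) := by
    simp [collapse, h, hκ_apply, edgeLap_self_one]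
  simp only [lap_eq_sum G, Matrix.mul_sum, Matrix.sum_mul, Matrix.mul_smul, Matrix.smul_mul,
    gaugeMatrix_transpose_mul_edgeLap_mul_gaugeMatrix]
  rw [← Finset.sum_erase (a := e0) _ (by rw [hloop, smul_zero]),
    Finset.sum_subtype (p := (· ≠ e0)) _ (by simp)]
  refine (G.contract e0 h).lap_eq_sum.trans (Finset.sum_congr rfl fun e _ => ?_)
  have hconn : (G.contract e0 h).conn e =
      (κ (G.src e.1))⁻¹ * G.conn e.1 * κ (G.tgt e.1) := by
    simp only [contract, hκ_apply]
    split_ifs <;> simp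
  rw [hconn]
  rfl

theorem lapDet_contract (G : CGraph R) (e0 : G.E) (h : G.src e0 ≠ G.tgt e0) :
    (G.contract e0 h).lapDet =
      ((transvection (G.src e0) (G.tgt e0) (G.conn e0 : R) * G.lap *
        transvection (G.tgt e0) (G.src e0) (↑(G.conn e0)⁻¹ : R)).submatrix
          (Subtype.val : {u // u ≠ G.tgt e0} → G.V) Subtype.val).det :=
  congrArg det (G.lap_contract e0 h)

end CGraph

open CGraph in
theorem lapDet_skein_general {R : Type} [CommRing R] (G : CGraph R) (e0 : G.E)
    (h : G.src e0 ≠ G.tgt e0) :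
    G.lapDet = (G.deleteEdge e0).lapDet + G.sign e0 * (G.contract e0 h).lapDet := by
  rw [lapDet_deleteEdge, lapDet_contract, det_sub_smul_edgeLap h, sub_add_cancel, lapDet]

/-- Skein relation for the Laplacian determinant: for a non-loop edge `e`,
`det L_G = det L_{G∖e} + σ_e · det L_{G/e}`. -/
theorem lapDet_skein {R : Type} [CommRing R] (G : CGraph R)
    (hsign : ∀ e, G.sign e = 1 ∨ G.sign e = -1)
    (e0 : G.E) (h : G.src e0 ≠ G.tgt e0) :
    G.lapDet = (G.deleteEdge e0).lapDet + G.sign e0 * (G.contract e0 h).lapDet :=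
  lapDet_skein_general G e0 h
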